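/- Let Z = max_{1 ≤ j ≤ M} G_j for a finite centered Gaussian vector containing the zero variable, and suppose E[Z] > 0. Then there exists an absolute constant c ∈ (0,1) such that P(min_{1 ≤ j ≤ M} G_j > −(E[Z])/4) ≤ c. Equivalently, P(∃ j : G_j ≤ −(E[Z])/4) ≥ 1 − c > 0. -/

import Mathlib

open MeasureTheory ProbabilityTheory

/-- Fernique-type bound: a centered Gaussian measure with small mass outside the ball of radius `s`
has mean norm less than `4 s`. -/
lemma mean_norm_lt {E : Type*} [NormedAddCommGroup E] [NormedSpace ℝ E]
    [SecondCountableTopology E] [CompleteSpace E] [MeasurableSpace E] [BorelSpace E]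
    (ν : Measure E) [IsGaussian ν] (hν : ∀ L : StrongDual ℝ E, ν[L] = 0)
    (s : ℝ) (hs : 0 < s) (h : ν.real {x | s < ‖x‖} ≤ 1 / 5) :
    ∫ x, ‖x‖ ∂ν < 4 * s := by
  have hrot := IsGaussian.map_rotation_eq_self_of_forall_strongDual_eq_zero hν (-(Real.pi / 4))
  have hle : 4 / 5 ≤ ν.real {x | ‖x‖ ≤ s} := by
    have : {x : E | ‖x‖ ≤ s} = {x | s < ‖x‖}ᶜ := by ext; simp
    rw [this, measureReal_compl (measurableSet_lt (by fun_prop) (by fun_prop))]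
    simp only [probReal_univ]
    linarith
  have h2 : 0 < √(2 : ℝ) := by positivity
  have h2sq : √(2 : ℝ) * √2 = 2 := Real.mul_self_sqrt (by norm_num)
  have key : ∀ t : ℝ, 0 < t → ν.real {x | √2 * (t + s) + s < ‖x‖} ≤
      1 / 4 * ν.real {x | t + s < ‖x‖} := by
    intro t ht
    have h1 := ProbabilityTheory.measure_le_mul_measure_gt_le_of_map_rotation_eq_self hrot s
      (√2 * (t + s) + s)
    have e : (√2 * (t + s) + s - s) / √2 = t + s := by field_simp; ring
    rw [e] at h1
    have h3 : ν.real {x | ‖x‖ ≤ s} * ν.real {x | √2 * (t + s) + s < ‖x‖} ≤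
        ν.real {x | t + s < ‖x‖} ^ 2 := by
      simp only [Measure.real]
      rw [← ENNReal.toReal_mul, ← ENNReal.toReal_pow]
      exact ENNReal.toReal_mono (by finiteness) h1
    have h4 : ν.real {x | t + s < ‖x‖} ≤ 1 / 5 :=
      (measureReal_mono (fun x hx => by simp only [Set.mem_ofPred_eq] at *; linarith)).trans h
    have h5 : 0 ≤ ν.real {x | t + s < ‖x‖} := measureReal_nonneg
    have h6 : 0 ≤ ν.real {x | √2 * (t + s) + s < ‖x‖} := measureReal_nonneg
    nlinarith
  have hint : Integrable (fun x => ‖x‖) ν := (IsGaussian.integrable_id (μ := ν)).norm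
  let f : E → ℝ := fun x => max ((‖x‖ - (√2 + 1) * s) / √2) 0
  let g : E → ℝ := fun x => max (‖x‖ - s) 0
  have hf : Integrable f ν :=
    ((hint.sub (integrable_const _)).div_const _).sup (integrable_const 0)
  have hg : Integrable g ν := (hint.sub (integrable_const _)).sup (integrable_const 0)
  have hf0 : 0 ≤ᵐ[ν] f := ae_of_all _ fun x => le_max_right _ _
  have hg0 : 0 ≤ᵐ[ν] g := ae_of_all _ fun x => le_max_right _ _
  have hfset : ∀ t : ℝ, 0 < t → {x | t < f x} = {x | √2 * (t + s) + s < ‖x‖} := by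
    intro t ht
    ext x
    simp only [f, Set.mem_ofPred_eq, lt_max_iff, lt_div_iff₀ h2, not_lt.2 ht.le, or_false]
    constructor <;> intro h <;> linarith
  have hgset : ∀ t : ℝ, 0 < t → {x | t < g x} = {x | t + s < ‖x‖} := by
    intro t ht
    ext x
    simp only [g, Set.mem_ofPred_eq, lt_max_iff, not_lt.2 ht.le, or_false]
    constructor <;> intro h <;> linarith
  have hfg : ∫⁻ x, ENNReal.ofReal (f x) ∂ν ≤ ENNReal.ofReal (1 / 4) *
      ∫⁻ x, ENNReal.ofReal (g x) ∂ν := by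
    rw [lintegral_eq_lintegral_meas_lt ν hf0 hf.aemeasurable,
      lintegral_eq_lintegral_meas_lt ν hg0 hg.aemeasurable,
      ← lintegral_const_mul' _ _ (by finiteness)]
    refine setLIntegral_mono' measurableSet_Ioi fun t ht => ?_
    rw [hfset t ht, hgset t ht, ← ofReal_measureReal, ← ofReal_measureReal,
      ← ENNReal.ofReal_mul (by norm_num)]
    exact ENNReal.ofReal_le_ofReal (key t ht)
  have hfg' : ∫ x, f x ∂ν ≤ 1 / 4 * ∫ x, g x ∂ν := by
    rw [← ofReal_integral_eq_lintegral_ofReal hf hf0, ← ofReal_integral_eq_lintegral_ofReal hg hg0,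
      ← ENNReal.ofReal_mul (by norm_num)] at hfg
    exact (ENNReal.ofReal_le_ofReal_iff
      (mul_nonneg (by norm_num) (integral_nonneg_of_ae hg0))).1 hfg
  have hgN : ∫ x, g x ∂ν ≤ ∫ x, ‖x‖ ∂ν := by
    refine integral_mono hg hint fun x => ?_
    exact max_le (by linarith) (norm_nonneg x)
  have hNf : ∫ x, ‖x‖ ∂ν ≤ (√2 + 1) * s + √2 * ∫ x, f x ∂ν := by
    have : ∫ x, ((√2 + 1) * s + √2 * f x) ∂ν = (√2 + 1) * s + √2 * ∫ x, f x ∂ν := by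
      rw [integral_add (integrable_const _) (hf.const_mul _), integral_const, probReal_univ, one_smul]
      congr 1
      exact integral_const_mul _ _
    rw [← this]
    refine integral_mono hint ((integrable_const _).add (hf.const_mul _)) fun x => ?_
    have := mul_le_mul_of_nonneg_left (le_max_left ((‖x‖ - (√2 + 1) * s) / √2) 0) h2.le
    rw [mul_div_cancel₀ _ h2.ne'] at this
    simp only [f]
    linarith
  have h2lt : √(2 : ℝ) < 1.42 := by
    rw [Real.sqrt_lt' (by norm_num)]; norm_num
  have hN0 : 0 ≤ ∫ x, ‖x‖ ∂ν := integral_nonneg fun x => norm_nonneg x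
  nlinarith

lemma map_neg_eq {E : Type*} [NormedAddCommGroup E] [NormedSpace ℝ E]
    [SecondCountableTopology E] [CompleteSpace E] [MeasurableSpace E] [BorelSpace E]
    (ν : Measure E) [IsGaussian ν] (hν : ∀ L : StrongDual ℝ E, ν[L] = 0) :
    ν.map (fun x => -x) = ν := by
  have hrot := IsGaussian.map_rotation_eq_self_of_forall_strongDual_eq_zero hν Real.pi
  have h := congrArg (Measure.map Prod.fst) hrot
  rw [Measure.map_map (by fun_prop) (by fun_prop)] at h
  have e : (Prod.fst ∘ (ContinuousLinearMap.rotation Real.pi : E × E →L[ℝ] E × E)) =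
      (fun x => -x) ∘ Prod.fst := by
    ext x; simp [ContinuousLinearMap.rotation_apply]
  rw [e, ← Measure.map_map (by fun_prop) (by fun_prop)] at h
  simpa [Measure.map_fst_prod] using h

/-- for a finite centered Gaussian vector containing the zero variable
with positive expected maximum `E Z`, the probability that all coordinates are
above `-(E Z)/4` is at most an absolute constant `c < 1`; equivalently, with
probability at least `1 - c > 0` some coordinate is `≤ -(E Z)/4`. -/
theorem stmt_2 :
    ∃ c : ℝ, 0 < c ∧ c < 1 ∧
      ∀ (Ω : Type) [MeasurableSpace Ω] (μ : Measure Ω) [IsProbabilityMeasure μ]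
        (M : ℕ), 0 < M →
        ∀ G : Fin M → Ω → ℝ,
          (∀ j, Measurable (G j)) →
          -- (G_1, …, G_M) is a centered jointly Gaussian vector
          (∀ a : Fin M → ℝ, ∃ v : NNReal,
            Measure.map (fun ω => ∑ j, a j * G j ω) μ = gaussianReal 0 v) →
          -- one coordinate is identically 0
          (∃ j₀, ∀ ω, G j₀ ω = 0) →
          Integrable (fun ω => ⨆ j, G j ω) μ →
          0 < ∫ ω, ⨆ j, G j ω ∂μ →
          μ {ω | ∀ j, -(∫ ω', ⨆ j', G j' ω' ∂μ) / 4 < G j ω} ≤ ENNReal.ofReal c ∧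
          μ {ω | ∃ j, G j ω ≤ -(∫ ω', ⨆ j', G j' ω' ∂μ) / 4} ≥
            ENNReal.ofReal (1 - c) := by
  refine ⟨9 / 10, by norm_num, by norm_num, ?_⟩
  intro Ω _ μ _ M hM G hG hgauss ⟨j₀, hj₀⟩ hZint hZpos
  have : Nonempty (Fin M) := ⟨j₀⟩
  set t : ℝ := (∫ ω', ⨆ j', G j' ω' ∂μ) / 4 with ht
  have ht0 : 0 < t := by positivity
  rw [neg_div, ← ht]
  let X : Ω → Fin M → ℝ := fun ω j => G j ω
  have hX : Measurable X := measurable_pi_lambda _ hG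
  let ν := μ.map X
  have : IsProbabilityMeasure ν := Measure.isProbabilityMeasure_map hX.aemeasurable
  have hL : ∀ L : StrongDual ℝ (Fin M → ℝ), ∃ v : NNReal, ν.map L = gaussianReal 0 v := by
    intro L
    obtain ⟨v, hv⟩ := hgauss (fun j => L (Pi.single j 1))
    refine ⟨v, ?_⟩
    rw [← hv, Measure.map_map (by fun_prop) hX]
    congr 1
    ext ω
    have : X ω = ∑ j, G j ω • (Pi.single j (1 : ℝ) : Fin M → ℝ) := by
      ext i
      simp [X, Finset.sum_apply, Pi.single_apply]
    simp only [Function.comp_apply]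
    rw [this, map_sum]
    exact Finset.sum_congr rfl fun j _ => by rw [map_smul, smul_eq_mul, mul_comm]
  have : IsGaussian ν := isGaussian_of_map_eq_gaussianReal fun L => by
    obtain ⟨v, hv⟩ := hL L
    exact ⟨0, v, hv⟩
  have hν : ∀ L : StrongDual ℝ (Fin M → ℝ), ν[L] = 0 := by
    intro L
    obtain ⟨v, hv⟩ := hL L
    have : ∫ x, L x ∂ν = ∫ y, y ∂(ν.map L) :=
      (integral_map (μ := ν) (φ := L) (f := fun y : ℝ => y) (by fun_prop) (by fun_prop)).symm
    rw [this, hv, integral_id_gaussianReal]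
  have hmeasB : MeasurableSet {x : Fin M → ℝ | ∃ j, x j ≤ -t} := by
    have : {x : Fin M → ℝ | ∃ j, x j ≤ -t} = ⋃ j, {x | x j ≤ -t} := by ext; simp
    rw [this]
    exact MeasurableSet.iUnion fun j => measurableSet_le (by fun_prop) (by fun_prop)
  have hmeasA : MeasurableSet {ω | ∃ j, G j ω ≤ -t} := hX hmeasB
  -- the main estimate
  have main : 1 / 10 ≤ μ.real {ω | ∃ j, G j ω ≤ -t} := by
    by_contra! hlt
    have hB : ν.real {x | ∃ j, x j ≤ -t} < 1 / 10 := by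
      rwa [map_measureReal_apply hX hmeasB]
    have hB' : ν.real {x | ∃ j, t ≤ x j} < 1 / 10 := by
      have e := map_neg_eq ν hν
      have : ν.real {x | ∃ j, x j ≤ -t} = ν.real {x | ∃ j, t ≤ x j} := by
        conv_lhs => rw [← e]
        rw [map_measureReal_apply (by fun_prop) hmeasB]
        simp
      rwa [← this]
    have hN : ν.real {x | t < ‖x‖} ≤ 1 / 5 := by
      have hsub : {x : Fin M → ℝ | t < ‖x‖} ⊆ {x | ∃ j, x j ≤ -t} ∪ {x | ∃ j, t ≤ x j} := by
        intro x hx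
        by_contra hcon
        simp only [Set.mem_union, Set.mem_ofPred_eq, not_or, not_exists, not_le] at hcon hx
        refine absurd hx (not_lt.2 ?_)
        rw [pi_norm_le_iff_of_nonneg ht0.le]
        intro j
        rw [Real.norm_eq_abs, abs_le]
        exact ⟨(hcon.1 j).le, (hcon.2 j).le⟩
      have := (measureReal_mono (μ := ν) hsub).trans (measureReal_union_le _ _)
      linarith
    have hfin := mean_norm_lt ν hν t ht0 hN
    have hint : Integrable (fun x => ‖x‖) ν := (IsGaussian.integrable_id (μ := ν)).norm
    have e1 : ∫ x, ‖x‖ ∂ν = ∫ ω, ‖X ω‖ ∂μ := integral_map hX.aemeasurable (by fun_prop)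
    have hint' : Integrable (fun ω => ‖X ω‖) μ := hint.comp_measurable hX
    have e2 : ∫ ω, ⨆ j, G j ω ∂μ ≤ ∫ ω, ‖X ω‖ ∂μ := by
      refine integral_mono hZint hint' fun ω => ?_
      exact ciSup_le fun j => (le_abs_self _).trans (norm_le_pi_norm (X ω) j)
    linarith
  have hset : {ω | ∀ j, -t < G j ω} = {ω | ∃ j, G j ω ≤ -t}ᶜ := by ext; simp
  constructor
  · rw [hset, ← ofReal_measureReal, measureReal_compl hmeasA]
    refine ENNReal.ofReal_le_ofReal ?_
    rw [probReal_univ]; linarith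
  · rw [ge_iff_le, ← ofReal_measureReal]
    exact ENNReal.ofReal_le_ofReal (by linarith)
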